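/- arXiv:0801.2567 — 6 statements merged into one kernel-verified Lean document; each statement's English description precedes it below -/
import Mathlib

section
/- Let A be an associative unital k-algebra equipped with a Frobenius structure Δ. Then the k-linear map R = Δ∘μ : A⊗A → A⊗A satisfies the Yang–Baxter equation: (R⊗id)∘(id⊗R)∘(R⊗id) = (id⊗R)∘(R⊗id)∘(id⊗R) as maps A⊗A⊗A → A⊗A⊗A. -/
open TensorProduct

noncomputable section

variable (k A : Type*) [Field k] [Ring A] [Algebra k A]

/-- Multiplication `μ : A ⊗[k] A → A` as a `k`-linear map. -/
def mu : A ⊗[k] A →ₗ[k] A := LinearMap.mul' k A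

/-- The standard associator `(A⊗A)⊗A ≃ A⊗(A⊗A)`. -/
def asso : ((A ⊗[k] A) ⊗[k] A) ≃ₗ[k] (A ⊗[k] (A ⊗[k] A)) := TensorProduct.assoc k A A A

/-- The flip `τ : A⊗A → A⊗A`, `x⊗y ↦ y⊗x`. -/
def tau : A ⊗[k] A →ₗ[k] A ⊗[k] A := (TensorProduct.comm k A A).toLinearMap

/-- A Frobenius structure on `A`: a coassociative comultiplication `Δ` satisfying the two
Frobenius compatibility conditions `Δ∘μ = (μ⊗id)∘(id⊗Δ) = (id⊗μ)∘(Δ⊗id)`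
(composites taken with the standard associator identifications). -/
def IsFrobenius (Δ : A →ₗ[k] A ⊗[k] A) : Prop :=
  (Δ.rTensor A ∘ₗ Δ = (asso k A).symm.toLinearMap ∘ₗ Δ.lTensor A ∘ₗ Δ) ∧
  (Δ ∘ₗ mu k A = (mu k A).rTensor A ∘ₗ (asso k A).symm.toLinearMap ∘ₗ Δ.lTensor A) ∧
  (Δ ∘ₗ mu k A = (mu k A).lTensor A ∘ₗ (asso k A).toLinearMap ∘ₗ Δ.rTensor A)

/-- `R : A⊗A → A⊗A` satisfies the Yang–Baxter equation:
`(R⊗id)∘(id⊗R)∘(R⊗id) = (id⊗R)∘(R⊗id)∘(id⊗R)` on `A⊗A⊗A`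
(with the standard associator identifications). -/
def YBE (R : A ⊗[k] A →ₗ[k] A ⊗[k] A) : Prop :=
  R.rTensor A ∘ₗ
      ((asso k A).symm.toLinearMap ∘ₗ R.lTensor A ∘ₗ (asso k A).toLinearMap) ∘ₗ
      R.rTensor A =
    ((asso k A).symm.toLinearMap ∘ₗ R.lTensor A ∘ₗ (asso k A).toLinearMap) ∘ₗ
      R.rTensor A ∘ₗ
      ((asso k A).symm.toLinearMap ∘ₗ R.lTensor A ∘ₗ (asso k A).toLinearMap)

/-! Write `Δ₁ = Δ ⊗ id`, `Δ₂ = id ⊗ Δ`, and similarly `μ₁`, `μ₂`. The Frobenius relations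
`μ₂ Δ₁ = Δ μ = μ₁ Δ₂` turn the two sides of the Yang–Baxter equation into `(Δ₁ Δ μ) (Δ μ μ₁)` and
`(Δ₂ Δ μ) (Δ μ μ₂)`. These agree factor by factor: by the same relations `Δ₁ Δ μ` and `Δ₂ Δ μ` are
both `(id ⊗ μ ⊗ id) (Δ ⊗ Δ)`, while `Δ μ μ₁` and `Δ μ μ₂` are both `(μ ⊗ μ) (id ⊗ Δ ⊗ id)`. -/

section Interchange

variable {R A B C D P Q : Type*} [CommSemiring R]
  [AddCommMonoid A] [AddCommMonoid B] [AddCommMonoid C] [AddCommMonoid D]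
  [AddCommMonoid P] [AddCommMonoid Q]
  [Module R A] [Module R B] [Module R C] [Module R D] [Module R P] [Module R Q]

/-- Both sides are `f ⊗ g` up to rebracketing. -/
theorem lTensor_comp_assoc_comp_rTensor_rTensor (f : A ⊗[R] B →ₗ[R] P) (g : C ⊗[R] D →ₗ[R] Q) :
    g.lTensor P ∘ₗ (TensorProduct.assoc R P C D).toLinearMap ∘ₗ
        (f.rTensor C ∘ₗ (TensorProduct.assoc R A B C).symm.toLinearMap).rTensor D =
      f.rTensor Q ∘ₗ (TensorProduct.assoc R A B Q).symm.toLinearMap ∘ₗ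
        (g.lTensor B ∘ₗ (TensorProduct.assoc R B C D).toLinearMap).lTensor A ∘ₗ
        (TensorProduct.assoc R A (B ⊗[R] C) D).toLinearMap := by
  ext
  rfl

/-- Both sides are `id ⊗ f ⊗ id` up to rebracketing. -/
theorem rTensor_lTensor_comp_assoc_comp_assoc_symm (f : B ⊗[R] C →ₗ[R] P) :
    (f.lTensor A ∘ₗ (TensorProduct.assoc R A B C).toLinearMap).rTensor D ∘ₗ
        (TensorProduct.assoc R (A ⊗[R] B) C D).symm.toLinearMap =
      (TensorProduct.assoc R A P D).symm.toLinearMap ∘ₗ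
        (f.rTensor D ∘ₗ (TensorProduct.assoc R B C D).symm.toLinearMap).lTensor A ∘ₗ
        (TensorProduct.assoc R A B (C ⊗[R] D)).toLinearMap := by
  ext
  rfl

end Interchange

section FrobeniusPair

variable {R M : Type*} [CommSemiring R] [AddCommMonoid M] [Module R M]

local notation "α" => LinearEquiv.toLinearMap (TensorProduct.assoc R M M M)
local notation "α⁻¹" => LinearEquiv.toLinearMap (LinearEquiv.symm (TensorProduct.assoc R M M M))

/-- The Frobenius relations between arbitrary linear maps `μ`, the multiplication, and `Δ`, the
comultiplication, of a module. In `IsFrobenius`, `μ` is the multiplication of an algebra and `Δ` is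
moreover coassociative. -/
structure IsFrobeniusPair (μ : M ⊗[R] M →ₗ[R] M) (Δ : M →ₗ[R] M ⊗[R] M) : Prop where
  comul_comp_mul_eq_rTensor : Δ ∘ₗ μ = μ.rTensor M ∘ₗ α⁻¹ ∘ₗ Δ.lTensor M
  comul_comp_mul_eq_lTensor : Δ ∘ₗ μ = μ.lTensor M ∘ₗ α ∘ₗ Δ.rTensor M

/-- The Yang–Baxter equation for an operator on the tensor square of a module, in the braid form of
`YBE`, with threefold tensor powers bracketed to the left. -/
def IsYangBaxter (T : M ⊗[R] M →ₗ[R] M ⊗[R] M) : Prop :=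
  T.rTensor M ∘ₗ (α⁻¹ ∘ₗ T.lTensor M ∘ₗ α) ∘ₗ T.rTensor M =
    (α⁻¹ ∘ₗ T.lTensor M ∘ₗ α) ∘ₗ T.rTensor M ∘ₗ (α⁻¹ ∘ₗ T.lTensor M ∘ₗ α)

namespace IsFrobeniusPair

variable {μ : M ⊗[R] M →ₗ[R] M} {Δ : M →ₗ[R] M ⊗[R] M}

theorem comul_comp_mul_comp_rTensor_mul (h : IsFrobeniusPair μ Δ) :
    Δ ∘ₗ μ ∘ₗ μ.rTensor M = Δ ∘ₗ μ ∘ₗ μ.lTensor M ∘ₗ α :=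
  calc
    Δ ∘ₗ μ ∘ₗ μ.rTensor M = μ.lTensor M ∘ₗ α ∘ₗ (Δ ∘ₗ μ).rTensor M := by
      rw [LinearMap.rTensor_comp, ← LinearMap.comp_assoc, h.comul_comp_mul_eq_lTensor]
      simp only [LinearMap.comp_assoc]
    _ = (μ.lTensor M ∘ₗ α ∘ₗ (μ.rTensor M ∘ₗ α⁻¹).rTensor M) ∘ₗ (Δ.lTensor M).rTensor M := by
      rw [h.comul_comp_mul_eq_rTensor]
      simp only [LinearMap.rTensor_comp, LinearMap.comp_assoc]
    _ = μ.rTensor M ∘ₗ α⁻¹ ∘ₗ (μ.lTensor M ∘ₗ α).lTensor M ∘ₗ (Δ.rTensor M).lTensor M ∘ₗ α := by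
      rw [lTensor_comp_assoc_comp_rTensor_rTensor]
      simp only [LinearMap.comp_assoc, LinearMap.lTensor_rTensor_comp_assoc]
    _ = μ.rTensor M ∘ₗ α⁻¹ ∘ₗ (Δ ∘ₗ μ).lTensor M ∘ₗ α := by
      rw [h.comul_comp_mul_eq_lTensor]
      simp only [LinearMap.lTensor_comp, LinearMap.comp_assoc]
    _ = (Δ ∘ₗ μ) ∘ₗ μ.lTensor M ∘ₗ α := by
      rw [LinearMap.lTensor_comp, h.comul_comp_mul_eq_rTensor]
      simp only [LinearMap.comp_assoc]

theorem rTensor_comul_comp_comul_comp_mul (h : IsFrobeniusPair μ Δ) :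
    Δ.rTensor M ∘ₗ Δ ∘ₗ μ = α⁻¹ ∘ₗ Δ.lTensor M ∘ₗ Δ ∘ₗ μ :=
  calc
    Δ.rTensor M ∘ₗ Δ ∘ₗ μ = (Δ ∘ₗ μ).rTensor M ∘ₗ α⁻¹ ∘ₗ Δ.lTensor M := by
      simp only [LinearMap.rTensor_comp, LinearMap.comp_assoc, ← h.comul_comp_mul_eq_rTensor]
    _ = (μ.lTensor M ∘ₗ α).rTensor M ∘ₗ (TensorProduct.assoc R (M ⊗[R] M) M M).symm.toLinearMap ∘ₗ
          TensorProduct.map Δ Δ := by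
      rw [h.comul_comp_mul_eq_lTensor, ← LinearMap.rTensor_comp_lTensor, LinearMap.rTensor_tensor]
      simp only [LinearMap.rTensor_comp, LinearMap.comp_assoc, LinearEquiv.symm_comp_assoc]
    _ = α⁻¹ ∘ₗ (μ.rTensor M ∘ₗ α⁻¹).lTensor M ∘ₗ
          (TensorProduct.assoc R M M (M ⊗[R] M)).toLinearMap ∘ₗ TensorProduct.map Δ Δ := by
      rw [← LinearMap.comp_assoc, rTensor_lTensor_comp_assoc_comp_assoc_symm]
      simp only [LinearMap.comp_assoc]
    _ = α⁻¹ ∘ₗ (Δ ∘ₗ μ).lTensor M ∘ₗ α ∘ₗ Δ.rTensor M := by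
      rw [h.comul_comp_mul_eq_rTensor, ← LinearMap.lTensor_comp_rTensor, LinearMap.lTensor_tensor]
      simp only [LinearMap.lTensor_comp, LinearMap.comp_assoc, LinearEquiv.comp_symm_assoc]
    _ = α⁻¹ ∘ₗ Δ.lTensor M ∘ₗ Δ ∘ₗ μ := by
      simp only [LinearMap.lTensor_comp, LinearMap.comp_assoc, ← h.comul_comp_mul_eq_lTensor]

end IsFrobeniusPair

theorem ybe_of_frobenius_general {μ : M ⊗[R] M →ₗ[R] M} {Δ : M →ₗ[R] M ⊗[R] M}
    (h : IsFrobeniusPair μ Δ) : IsYangBaxter (Δ ∘ₗ μ) :=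
  calc
    (Δ ∘ₗ μ).rTensor M ∘ₗ (α⁻¹ ∘ₗ (Δ ∘ₗ μ).lTensor M ∘ₗ α) ∘ₗ (Δ ∘ₗ μ).rTensor M =
        Δ.rTensor M ∘ₗ (μ.rTensor M ∘ₗ α⁻¹ ∘ₗ Δ.lTensor M) ∘ₗ
          (μ.lTensor M ∘ₗ α ∘ₗ Δ.rTensor M) ∘ₗ μ.rTensor M := by
      simp only [LinearMap.rTensor_comp, LinearMap.lTensor_comp, LinearMap.comp_assoc]
    _ = (Δ.rTensor M ∘ₗ Δ ∘ₗ μ) ∘ₗ (Δ ∘ₗ μ ∘ₗ μ.rTensor M) := by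
      rw [← h.comul_comp_mul_eq_rTensor, ← h.comul_comp_mul_eq_lTensor]
      simp only [LinearMap.comp_assoc]
    _ = (α⁻¹ ∘ₗ Δ.lTensor M ∘ₗ Δ ∘ₗ μ) ∘ₗ (Δ ∘ₗ μ ∘ₗ μ.lTensor M ∘ₗ α) := by
      rw [h.rTensor_comul_comp_comul_comp_mul, h.comul_comp_mul_comp_rTensor_mul]
    _ = (α⁻¹ ∘ₗ Δ.lTensor M) ∘ₗ (μ.lTensor M ∘ₗ α ∘ₗ Δ.rTensor M) ∘ₗ
          (μ.rTensor M ∘ₗ α⁻¹ ∘ₗ Δ.lTensor M) ∘ₗ μ.lTensor M ∘ₗ α := by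
      rw [← h.comul_comp_mul_eq_rTensor, ← h.comul_comp_mul_eq_lTensor]
      simp only [LinearMap.comp_assoc]
    _ = (α⁻¹ ∘ₗ (Δ ∘ₗ μ).lTensor M ∘ₗ α) ∘ₗ (Δ ∘ₗ μ).rTensor M ∘ₗ
          (α⁻¹ ∘ₗ (Δ ∘ₗ μ).lTensor M ∘ₗ α) := by
      simp only [LinearMap.rTensor_comp, LinearMap.lTensor_comp, LinearMap.comp_assoc]

end FrobeniusPair

/-- For a Frobenius structure `Δ` on an associative unital `k`-algebra `A`,
`R = Δ∘μ : A⊗A → A⊗A` satisfies the Yang–Baxter equation. -/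
theorem ybe_of_frobenius (Δ : A →ₗ[k] A ⊗[k] A) (hΔ : IsFrobenius k A Δ) :
    YBE k A (Δ ∘ₗ mu k A) :=
  ybe_of_frobenius_general ⟨hΔ.2.1, hΔ.2.2⟩
end
end

section
/- (D₂∘D₁ = 0.) Let A be an associative unital k-algebra with a Frobenius structure Δ. For every k-linear map h : A → A, put φ₁ = d^{1,1}(h) and φ₂ = −d^{1,2}(h). Then d^{2,1}(φ₁) = 0, d^{2,2}_{(1)}(φ₁,φ₂) = 0, d^{2,2}_{(2)}(φ₁,φ₂) = 0, and d^{2,3}(φ₂) = 0; that is, D₂^{(i)}∘D₁ = 0 for both choices i = 1, 2 of the second differential. -/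
open TensorProduct

noncomputable section

variable (k A : Type*) [Field k] [Ring A] [Algebra k A]

/-- `d^{1,1}(h) = μ∘(h⊗id) + μ∘(id⊗h) − h∘μ`. -/
def d11 (h : A →ₗ[k] A) : A ⊗[k] A →ₗ[k] A :=
  mu k A ∘ₗ h.rTensor A + mu k A ∘ₗ h.lTensor A - h ∘ₗ mu k A

/-- `d^{1,2}(h) = (h⊗id)∘Δ + (id⊗h)∘Δ − Δ∘h`. -/
def d12 (Δ : A →ₗ[k] A ⊗[k] A) (h : A →ₗ[k] A) : A →ₗ[k] A ⊗[k] A :=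
  h.rTensor A ∘ₗ Δ + h.lTensor A ∘ₗ Δ - Δ ∘ₗ h

/-- `d^{2,1}(φ₁) = μ∘(φ₁⊗id) + φ₁∘(μ⊗id) − μ∘(id⊗φ₁) − φ₁∘(id⊗μ)`. -/
def d21 (φ₁ : A ⊗[k] A →ₗ[k] A) : ((A ⊗[k] A) ⊗[k] A) →ₗ[k] A :=
  mu k A ∘ₗ φ₁.rTensor A + φ₁ ∘ₗ (mu k A).rTensor A
  - mu k A ∘ₗ φ₁.lTensor A ∘ₗ (asso k A).toLinearMap
  - φ₁ ∘ₗ (mu k A).lTensor A ∘ₗ (asso k A).toLinearMap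

/-- `d^{2,2}_{(1)}(φ₁,φ₂) = Δ∘φ₁ + φ₂∘μ − (φ₁⊗id)∘(id⊗Δ) − (μ⊗id)∘(id⊗φ₂)`. -/
def d221 (Δ : A →ₗ[k] A ⊗[k] A) (φ₁ : A ⊗[k] A →ₗ[k] A) (φ₂ : A →ₗ[k] A ⊗[k] A) :
    A ⊗[k] A →ₗ[k] A ⊗[k] A :=
  Δ ∘ₗ φ₁ + φ₂ ∘ₗ mu k A
  - φ₁.rTensor A ∘ₗ (asso k A).symm.toLinearMap ∘ₗ Δ.lTensor A
  - (mu k A).rTensor A ∘ₗ (asso k A).symm.toLinearMap ∘ₗ φ₂.lTensor A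

/-- `d^{2,2}_{(2)}(φ₁,φ₂) = Δ∘φ₁ + φ₂∘μ − (id⊗φ₁)∘(Δ⊗id) − (id⊗μ)∘(φ₂⊗id)`. -/
def d222 (Δ : A →ₗ[k] A ⊗[k] A) (φ₁ : A ⊗[k] A →ₗ[k] A) (φ₂ : A →ₗ[k] A ⊗[k] A) :
    A ⊗[k] A →ₗ[k] A ⊗[k] A :=
  Δ ∘ₗ φ₁ + φ₂ ∘ₗ mu k A
  - φ₁.lTensor A ∘ₗ (asso k A).toLinearMap ∘ₗ Δ.rTensor A
  - (mu k A).lTensor A ∘ₗ (asso k A).toLinearMap ∘ₗ φ₂.rTensor A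

/-- `d^{2,3}(φ₂) = (φ₂⊗id)∘Δ + (Δ⊗id)∘φ₂ − (id⊗φ₂)∘Δ − (id⊗Δ)∘φ₂`. -/
def d23 (Δ : A →ₗ[k] A ⊗[k] A) (φ₂ : A →ₗ[k] A ⊗[k] A) :
    A →ₗ[k] (A ⊗[k] A) ⊗[k] A :=
  φ₂.rTensor A ∘ₗ Δ + Δ.rTensor A ∘ₗ φ₂
  - (asso k A).symm.toLinearMap ∘ₗ φ₂.lTensor A ∘ₗ Δ
  - (asso k A).symm.toLinearMap ∘ₗ Δ.lTensor A ∘ₗ φ₂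

/-!
An endomorphism `h` acts on the tensor powers of `A` by the Leibniz rule, hence on linear maps
between them by `⁅h, f⁆ = h ∘ f - f ∘ h`. This action is a derivation for composition and for
`- ⊗ id`, `id ⊗ -`, and it kills the associators. Up to sign, `D₁(h)` is `(⁅h, μ⁆, ⁅h, Δ⁆)`, while
`D₂` is the linearization of the associativity, Frobenius and coassociativity relations. The
Leibniz rule therefore identifies each component of `D₂(D₁(h))` with the difference of the actions
of `-h` on the two sides of a relation, which is zero.
-/

section LieAction

variable {R L M N P : Type*} [CommRing R] [LieRing L] [LieAlgebra R L]
  [AddCommGroup M] [Module R M] [LieRingModule L M] [LieModule R L M]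
  [AddCommGroup N] [Module R N] [LieRingModule L N] [LieModule R L N]
  [AddCommGroup P] [Module R P] [LieRingModule L P] [LieModule R L P]

theorem lie_linearMap_comp (x : L) (g : N →ₗ[R] P) (f : M →ₗ[R] N) :
    ⁅x, g ∘ₗ f⁆ = ⁅x, g⁆ ∘ₗ f + g ∘ₗ ⁅x, f⁆ := by
  ext m
  simp

theorem lie_rTensor (x : L) (f : M →ₗ[R] N) :
    ⁅x, f.rTensor P⁆ = ⁅x, f⁆.rTensor P := by
  ext m p
  simp [sub_tmul]

theorem lie_lTensor (x : L) (f : M →ₗ[R] N) :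
    ⁅x, f.lTensor P⁆ = ⁅x, f⁆.lTensor P := by
  ext p m
  simp [tmul_sub]

theorem lie_tensorProduct_assoc (x : L) :
    ⁅x, (TensorProduct.assoc R M N P).toLinearMap⁆ = 0 := by
  ext m n p
  simp [add_tmul, tmul_add, add_assoc]

theorem lie_tensorProduct_assoc_symm (x : L) :
    ⁅x, (TensorProduct.assoc R M N P).symm.toLinearMap⁆ = 0 := by
  ext m n p
  simp [add_tmul, tmul_add, add_assoc]

end LieAction

section Differentials

variable {k A}

theorem mu_comp_rTensor_mu :
    mu k A ∘ₗ (mu k A).rTensor A = mu k A ∘ₗ (mu k A).lTensor A ∘ₗ (asso k A).toLinearMap := by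
  ext x y z
  simp [mu, asso, mul_assoc]

variable {L : Type*} [LieRing L] [LieAlgebra k L] [LieRingModule L A] [LieModule k L A]

theorem lie_asso (x : L) : ⁅x, (asso k A).toLinearMap⁆ = 0 :=
  lie_tensorProduct_assoc x

theorem lie_asso_symm (x : L) : ⁅x, (asso k A).symm.toLinearMap⁆ = 0 :=
  lie_tensorProduct_assoc_symm x

theorem d21_lie_mu (x : L) :
    d21 k A ⁅x, mu k A⁆ =
      ⁅x, mu k A ∘ₗ (mu k A).rTensor A⁆ -
        ⁅x, mu k A ∘ₗ (mu k A).lTensor A ∘ₗ (asso k A).toLinearMap⁆ := by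
  simp only [d21, lie_linearMap_comp, lie_rTensor, lie_lTensor, lie_asso,
    LinearMap.comp_zero, add_zero]
  abel

theorem d221_lie (Δ : A →ₗ[k] A ⊗[k] A) (x : L) :
    d221 k A Δ ⁅x, mu k A⁆ ⁅x, Δ⁆ =
      ⁅x, Δ ∘ₗ mu k A⁆ - ⁅x, (mu k A).rTensor A ∘ₗ (asso k A).symm.toLinearMap ∘ₗ Δ.lTensor A⁆ := by
  simp only [d221, lie_linearMap_comp, lie_rTensor, lie_lTensor, lie_asso_symm,
    LinearMap.zero_comp, zero_add]
  abel

theorem d222_lie (Δ : A →ₗ[k] A ⊗[k] A) (x : L) :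
    d222 k A Δ ⁅x, mu k A⁆ ⁅x, Δ⁆ =
      ⁅x, Δ ∘ₗ mu k A⁆ - ⁅x, (mu k A).lTensor A ∘ₗ (asso k A).toLinearMap ∘ₗ Δ.rTensor A⁆ := by
  simp only [d222, lie_linearMap_comp, lie_rTensor, lie_lTensor, lie_asso,
    LinearMap.zero_comp, zero_add]
  abel

theorem d23_lie (Δ : A →ₗ[k] A ⊗[k] A) (x : L) :
    d23 k A Δ ⁅x, Δ⁆ =
      ⁅x, Δ.rTensor A ∘ₗ Δ⁆ - ⁅x, (asso k A).symm.toLinearMap ∘ₗ Δ.lTensor A ∘ₗ Δ⁆ := by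
  simp only [d23, lie_linearMap_comp, lie_rTensor, lie_lTensor, lie_asso_symm,
    LinearMap.zero_comp, LinearMap.comp_add, zero_add]
  abel

local instance : LieRing (Module.End k A) := LieRing.ofAssociativeRing

theorem d11_eq_lie_mu (h : A →ₗ[k] A) : d11 k A h = ⁅-h, mu k A⁆ := by
  ext x y
  simp [d11]

theorem neg_d12_eq_lie (Δ : A →ₗ[k] A ⊗[k] A) (h : A →ₗ[k] A) :
    -d12 k A Δ h = ⁅-h, Δ⁆ := by
  have lie_tensor (t : A ⊗[k] A) : ⁅h, t⁆ = h.rTensor A t + h.lTensor A t := rfl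
  ext x
  simp [d12, lie_tensor]

theorem d21_d11_eq_zero (h : A →ₗ[k] A) : d21 k A (d11 k A h) = 0 := by
  rw [d11_eq_lie_mu, d21_lie_mu, mu_comp_rTensor_mu, sub_self]

theorem d221_d11_neg_d12_eq_zero {Δ : A →ₗ[k] A ⊗[k] A}
    (hΔ : Δ ∘ₗ mu k A = (mu k A).rTensor A ∘ₗ (asso k A).symm.toLinearMap ∘ₗ Δ.lTensor A)
    (h : A →ₗ[k] A) : d221 k A Δ (d11 k A h) (-d12 k A Δ h) = 0 := by
  rw [d11_eq_lie_mu, neg_d12_eq_lie, d221_lie, hΔ, sub_self]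

theorem d222_d11_neg_d12_eq_zero {Δ : A →ₗ[k] A ⊗[k] A}
    (hΔ : Δ ∘ₗ mu k A = (mu k A).lTensor A ∘ₗ (asso k A).toLinearMap ∘ₗ Δ.rTensor A)
    (h : A →ₗ[k] A) : d222 k A Δ (d11 k A h) (-d12 k A Δ h) = 0 := by
  rw [d11_eq_lie_mu, neg_d12_eq_lie, d222_lie, hΔ, sub_self]

theorem d23_neg_d12_eq_zero {Δ : A →ₗ[k] A ⊗[k] A}
    (hΔ : Δ.rTensor A ∘ₗ Δ = (asso k A).symm.toLinearMap ∘ₗ Δ.lTensor A ∘ₗ Δ)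
    (h : A →ₗ[k] A) : d23 k A Δ (-d12 k A Δ h) = 0 := by
  rw [neg_d12_eq_lie, d23_lie, hΔ]
  exact sub_self (G := A →ₗ[k] (A ⊗[k] A) ⊗[k] A) _

end Differentials

/-- `D₂∘D₁ = 0`: for every `k`-linear `h : A → A`, the pair
`(φ₁, φ₂) = (d^{1,1}(h), −d^{1,2}(h)) = D₁(h)` satisfies all four second-differential
conditions, i.e. `D₂^{(i)}∘D₁ = 0` for `i = 1, 2`. -/
theorem D2_comp_D1_eq_zero (Δ : A →ₗ[k] A ⊗[k] A) (hΔ : IsFrobenius k A Δ)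
    (h : A →ₗ[k] A) :
    d21 k A (d11 k A h) = 0 ∧
    d221 k A Δ (d11 k A h) (-(d12 k A Δ h)) = 0 ∧
    d222 k A Δ (d11 k A h) (-(d12 k A Δ h)) = 0 ∧
    d23 k A Δ (-(d12 k A Δ h)) = 0 := by
  obtain ⟨coassoc, frobenius_left, frobenius_right⟩ := hΔ
  exact ⟨d21_d11_eq_zero h, d221_d11_neg_d12_eq_zero frobenius_left h,
    d222_d11_neg_d12_eq_zero frobenius_right h, d23_neg_d12_eq_zero coassoc h⟩
end
end

section
/- (The d^{3,2}-component of D₃∘D₂ = 0.) Let A be an associative unital k-algebra with a Frobenius structure Δ. For all k-linear maps φ₁ : A⊗A → A and φ₂ : A → A⊗A, put ξ₁ = d^{2,1}(φ₁) and ξ₂ = d^{2,2}_{(1)}(φ₁,φ₂). Then d^{3,2}(ξ₁,ξ₂) = Δ∘ξ₁ + ξ₂∘(id⊗μ) + (μ⊗id)∘(id⊗ξ₂) − ξ₂∘(μ⊗id) − (ξ₁⊗id)∘(id⊗id⊗Δ) = 0 as a map A⊗A⊗A → A⊗A. -/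
open TensorProduct

noncomputable section

variable (k A : Type*) [Field k] [Ring A] [Algebra k A]

/-- Associator `((A⊗A)⊗A)⊗A ≃ A⊗((A⊗A)⊗A)` moving the first factor outside. -/
def asso4 : (((A ⊗[k] A) ⊗[k] A) ⊗[k] A) ≃ₗ[k] (A ⊗[k] ((A ⊗[k] A) ⊗[k] A)) :=
  (TensorProduct.assoc k (A ⊗[k] A) A A) ≪≫ₗ (TensorProduct.assoc k A A (A ⊗[k] A)) ≪≫ₗ
    (TensorProduct.congr (LinearEquiv.refl k A) (TensorProduct.assoc k A A A).symm)

/-- `d^{3,1}(ξ₁) = μ∘(ξ₁⊗id) + ξ₁∘(id⊗μ⊗id) + μ∘(id⊗ξ₁) − ξ₁∘(μ⊗id⊗id) − ξ₁∘(id⊗id⊗μ)`. -/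
def d31 (ξ₁ : (A ⊗[k] A) ⊗[k] A →ₗ[k] A) :
    (((A ⊗[k] A) ⊗[k] A) ⊗[k] A) →ₗ[k] A :=
  mu k A ∘ₗ ξ₁.rTensor A
  + ξ₁ ∘ₗ (((mu k A).lTensor A ∘ₗ (asso k A).toLinearMap).rTensor A)
  + mu k A ∘ₗ ξ₁.lTensor A ∘ₗ (asso4 k A).toLinearMap
  - ξ₁ ∘ₗ ((mu k A).rTensor A).rTensor A
  - ξ₁ ∘ₗ (mu k A).lTensor (A ⊗[k] A) ∘ₗ (TensorProduct.assoc k (A ⊗[k] A) A A).toLinearMap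

/-- `d^{3,2}(ξ₁,ξ₂) = Δ∘ξ₁ + ξ₂∘(id⊗μ) + (μ⊗id)∘(id⊗ξ₂) − ξ₂∘(μ⊗id) − (ξ₁⊗id)∘(id⊗id⊗Δ)`. -/
def d32 (Δ : A →ₗ[k] A ⊗[k] A) (ξ₁ : (A ⊗[k] A) ⊗[k] A →ₗ[k] A)
    (ξ₂ : A ⊗[k] A →ₗ[k] A ⊗[k] A) : ((A ⊗[k] A) ⊗[k] A) →ₗ[k] A ⊗[k] A :=
  Δ ∘ₗ ξ₁
  + ξ₂ ∘ₗ (mu k A).lTensor A ∘ₗ (asso k A).toLinearMap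
  + (mu k A).rTensor A ∘ₗ (asso k A).symm.toLinearMap ∘ₗ ξ₂.lTensor A ∘ₗ (asso k A).toLinearMap
  - ξ₂ ∘ₗ (mu k A).rTensor A
  - ξ₁.rTensor A ∘ₗ (TensorProduct.assoc k (A ⊗[k] A) A A).symm.toLinearMap ∘ₗ
      Δ.lTensor (A ⊗[k] A)

/-- `d^{3,3}(ξ₂,ξ₃) = ξ₃∘μ + (id⊗Δ)∘ξ₂ + (id⊗ξ₂)∘(Δ⊗id) − (Δ⊗id)∘ξ₂ − (id⊗id⊗μ)∘(ξ₃⊗id)`. -/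
def d33 (Δ : A →ₗ[k] A ⊗[k] A) (ξ₂ : A ⊗[k] A →ₗ[k] A ⊗[k] A)
    (ξ₃ : A →ₗ[k] (A ⊗[k] A) ⊗[k] A) : A ⊗[k] A →ₗ[k] (A ⊗[k] A) ⊗[k] A :=
  ξ₃ ∘ₗ mu k A
  + (asso k A).symm.toLinearMap ∘ₗ Δ.lTensor A ∘ₗ ξ₂
  + (asso k A).symm.toLinearMap ∘ₗ ξ₂.lTensor A ∘ₗ (asso k A).toLinearMap ∘ₗ Δ.rTensor A
  - Δ.rTensor A ∘ₗ ξ₂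
  - (mu k A).lTensor (A ⊗[k] A) ∘ₗ (TensorProduct.assoc k (A ⊗[k] A) A A).toLinearMap ∘ₗ
      ξ₃.rTensor A

/-- `d^{4,2}(ζ₁,ζ₂) = Δ∘ζ₁ + ζ₂∘(id⊗id⊗μ) + (μ⊗id)∘(id⊗ζ₂)
  − (ζ₁⊗id)∘(id⊗id⊗id⊗Δ) − ζ₂∘(μ⊗id⊗id) − ζ₂∘(id⊗μ⊗id)`. -/
def d42 (Δ : A →ₗ[k] A ⊗[k] A) (ζ₁ : ((A ⊗[k] A) ⊗[k] A) ⊗[k] A →ₗ[k] A)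
    (ζ₂ : (A ⊗[k] A) ⊗[k] A →ₗ[k] A ⊗[k] A) :
    (((A ⊗[k] A) ⊗[k] A) ⊗[k] A) →ₗ[k] A ⊗[k] A :=
  Δ ∘ₗ ζ₁
  + ζ₂ ∘ₗ (mu k A).lTensor (A ⊗[k] A) ∘ₗ (TensorProduct.assoc k (A ⊗[k] A) A A).toLinearMap
  + (mu k A).rTensor A ∘ₗ (asso k A).symm.toLinearMap ∘ₗ ζ₂.lTensor A ∘ₗ (asso4 k A).toLinearMap
  - ζ₁.rTensor A ∘ₗ (TensorProduct.assoc k ((A ⊗[k] A) ⊗[k] A) A A).symm.toLinearMap ∘ₗ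
      Δ.lTensor ((A ⊗[k] A) ⊗[k] A)
  - ζ₂ ∘ₗ ((mu k A).rTensor A).rTensor A
  - ζ₂ ∘ₗ (((mu k A).lTensor A ∘ₗ (asso k A).toLinearMap).rTensor A)

/-! By the left Frobenius condition, `Δ` is a morphism of left `A`-modules, where `A` acts on the
left factor of `A ⊗ A`. Deform the product to `μ + ε φ₁`, and with it the action on `A ⊗ A`, and
deform `Δ` to `Δ + ε φ₂`, with `ε² = 0`. Then `ξ₁` is the `ε`-coefficient of `(x y) z - x (y z)` and
`ξ₂` that of `Δ (x y) - x • Δ y`, and the claim is the `ε`-coefficient of the telescoping identity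
`Δ ((x y) z - x (y z)) = (Δ ((x y) z) - (x y) • Δ z) + ((x y) • Δ z - x • y • Δ z)
  - x • (Δ (y z) - y • Δ z) - (Δ (x (y z)) - x • Δ (y z))`. -/

lemma rTensor_assoc_symm_tmul {R M N P Q : Type*} [CommSemiring R]
    [AddCommMonoid M] [AddCommMonoid N] [AddCommMonoid P] [AddCommMonoid Q]
    [Module R M] [Module R N] [Module R P] [Module R Q]
    (f : M ⊗[R] N →ₗ[R] P) (m : M) (t : N ⊗[R] Q) :
    f.rTensor Q ((TensorProduct.assoc R M N Q).symm (m ⊗ₜ t)) = (curry f m).rTensor Q t := by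
  induction t with
  | zero => simp only [tmul_zero, map_zero]
  | add t u ht hu => simp only [tmul_add, map_add, ht, hu]
  | tmul n q => rfl

lemma rTensor_mulLeft_apply {R B M : Type*} [CommSemiring R] [Semiring B] [Algebra R B]
    [AddCommMonoid M] [Module R M] (b : B) (t : B ⊗[R] M) :
    (LinearMap.mulLeft R b).rTensor M t = b • t :=
  rfl

section Evaluation

variable {k A}

lemma mu_tmul (x y : A) : mu k A (x ⊗ₜ y) = x * y :=
  LinearMap.mul'_apply

lemma curry_mu (x : A) : curry (mu k A) x = LinearMap.mulLeft k x :=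
  rfl

lemma map_mul_eq_smul_of_comp_mu {Δ : A →ₗ[k] A ⊗[k] A}
    (hΔ : Δ ∘ₗ mu k A = (mu k A).rTensor A ∘ₗ (asso k A).symm.toLinearMap ∘ₗ Δ.lTensor A)
    (x y : A) : Δ (x * y) = x • Δ y :=
  calc
    Δ (x * y) = (mu k A).rTensor A ((asso k A).symm (x ⊗ₜ Δ y)) := by
      rw [← mu_tmul (k := k)]
      exact LinearMap.congr_fun hΔ (x ⊗ₜ y)
    _ = x • Δ y := by
      rw [asso, rTensor_assoc_symm_tmul, curry_mu, rTensor_mulLeft_apply]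

lemma d21_tmul (φ : A ⊗[k] A →ₗ[k] A) (x y z : A) :
    d21 k A φ ((x ⊗ₜ y) ⊗ₜ z) =
      φ (x ⊗ₜ y) * z + φ ((x * y) ⊗ₜ z) - x * φ (y ⊗ₜ z) - φ (x ⊗ₜ (y * z)) := by
  simp only [d21, asso, LinearMap.sub_apply, LinearMap.add_apply, LinearMap.comp_apply,
    LinearEquiv.coe_coe, LinearMap.rTensor_tmul, LinearMap.lTensor_tmul, assoc_tmul, mu_tmul]

lemma d221_tmul (Δ : A →ₗ[k] A ⊗[k] A) (φ₁ : A ⊗[k] A →ₗ[k] A) (φ₂ : A →ₗ[k] A ⊗[k] A)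
    (x y : A) :
    d221 k A Δ φ₁ φ₂ (x ⊗ₜ y) =
      Δ (φ₁ (x ⊗ₜ y)) + φ₂ (x * y) - (curry φ₁ x).rTensor A (Δ y) - x • φ₂ y := by
  simp only [d221, asso, LinearMap.sub_apply, LinearMap.add_apply, LinearMap.comp_apply,
    LinearEquiv.coe_coe, LinearMap.lTensor_tmul, mu_tmul, rTensor_assoc_symm_tmul, curry_mu,
    rTensor_mulLeft_apply]

lemma d32_tmul (Δ : A →ₗ[k] A ⊗[k] A) (ξ₁ : (A ⊗[k] A) ⊗[k] A →ₗ[k] A)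
    (ξ₂ : A ⊗[k] A →ₗ[k] A ⊗[k] A) (x y z : A) :
    d32 k A Δ ξ₁ ξ₂ ((x ⊗ₜ y) ⊗ₜ z) =
      Δ (ξ₁ ((x ⊗ₜ y) ⊗ₜ z)) + ξ₂ (x ⊗ₜ (y * z)) + x • ξ₂ (y ⊗ₜ z) - ξ₂ ((x * y) ⊗ₜ z)
        - (curry ξ₁ (x ⊗ₜ y)).rTensor A (Δ z) := by
  simp only [d32, asso, LinearMap.sub_apply, LinearMap.add_apply, LinearMap.comp_apply,
    LinearEquiv.coe_coe, LinearMap.rTensor_tmul, LinearMap.lTensor_tmul, assoc_tmul, mu_tmul,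
    rTensor_assoc_symm_tmul, curry_mu, rTensor_mulLeft_apply]

lemma curry_d21_tmul (φ : A ⊗[k] A →ₗ[k] A) (x y : A) :
    curry (d21 k A φ) (x ⊗ₜ y) =
      LinearMap.mulLeft k (φ (x ⊗ₜ y)) + curry φ (x * y)
        - LinearMap.mulLeft k x ∘ₗ curry φ y - curry φ x ∘ₗ LinearMap.mulLeft k y :=
  LinearMap.ext fun z => d21_tmul φ x y z

lemma rTensor_curry_d21_tmul (φ : A ⊗[k] A →ₗ[k] A) (x y : A) (t : A ⊗[k] A) :
    (curry (d21 k A φ) (x ⊗ₜ y)).rTensor A t =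
      φ (x ⊗ₜ y) • t + (curry φ (x * y)).rTensor A t
        - x • (curry φ y).rTensor A t - (curry φ x).rTensor A (y • t) := by
  simp only [curry_d21_tmul, LinearMap.rTensor_sub, LinearMap.rTensor_add, LinearMap.rTensor_comp,
    LinearMap.sub_apply, LinearMap.add_apply, LinearMap.comp_apply, rTensor_mulLeft_apply]

end Evaluation

theorem d32_comp_D2_eq_zero_general (Δ : A →ₗ[k] A ⊗[k] A)
    (hΔ : Δ ∘ₗ mu k A = (mu k A).rTensor A ∘ₗ (asso k A).symm.toLinearMap ∘ₗ Δ.lTensor A)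
    (φ₁ : A ⊗[k] A →ₗ[k] A) (φ₂ : A →ₗ[k] A ⊗[k] A) :
    d32 k A Δ (d21 k A φ₁) (d221 k A Δ φ₁ φ₂) = 0 := by
  have Δ_mul : ∀ x y : A, Δ (x * y) = x • Δ y := map_mul_eq_smul_of_comp_mu hΔ
  refine TensorProduct.ext_threefold fun x y z => ?_
  have Δ_d21 : Δ (d21 k A φ₁ ((x ⊗ₜ y) ⊗ₜ z)) =
      φ₁ (x ⊗ₜ y) • Δ z + Δ (φ₁ ((x * y) ⊗ₜ z)) - x • Δ (φ₁ (y ⊗ₜ z))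
        - Δ (φ₁ (x ⊗ₜ (y * z))) := by
    simp only [d21_tmul, map_add, map_sub, Δ_mul]
  rw [d32_tmul, Δ_d21, rTensor_curry_d21_tmul]
  simp only [d221_tmul, smul_add, smul_sub, Δ_mul, mul_smul, mul_assoc, LinearMap.zero_apply]
  abel

/-- the `d^{3,2}`-component of `D₃∘D₂ = 0`: for all `k`-linear maps
`φ₁ : A⊗A → A` and `φ₂ : A → A⊗A`, with `ξ₁ = d^{2,1}(φ₁)` and `ξ₂ = d^{2,2}_{(1)}(φ₁,φ₂)`,
one has `d^{3,2}(ξ₁,ξ₂) = 0`. -/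
theorem d32_comp_D2_eq_zero (Δ : A →ₗ[k] A ⊗[k] A) (hΔ : IsFrobenius k A Δ)
    (φ₁ : A ⊗[k] A →ₗ[k] A) (φ₂ : A →ₗ[k] A ⊗[k] A) :
    d32 k A Δ (d21 k A φ₁) (d221 k A Δ φ₁ φ₂) = 0 :=
  d32_comp_D2_eq_zero_general k A Δ hΔ.2.1 φ₁ φ₂
end
end

section
/- Let A be a finite-dimensional associative unital k-algebra (k a field, with 1_A ≠ 0) with a Frobenius structure Δ, and suppose that Δ(1) = 1⊗x + x⊗1 for some x ∈ A. If h : A → A is a k-linear map with d^{1,1}(h) = 0 and d^{1,2}(h) = 0 (i.e., h ∈ Z¹_f(A;A)), then there exists α ∈ k with h(x) = α·1 and 2α = 0. In particular h(x) = 0 when char(k) ≠ 2. -/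
open TensorProduct

noncomputable section

variable (k A : Type*) [Field k] [Ring A] [Algebra k A]

/-!
A derivation kills the unit, so the coderivation identity for `h`, evaluated at `1`, reads
`1 ⊗ h x + h x ⊗ 1 = 0`. Contracting the left factor with a linear functional `f` such that
`f 1 = 1` gives `h x = -f (h x) • 1`; applying `f` once more gives `2 * f (h x) = 0`.
-/

section PointedModule

variable {R M : Type*} [CommRing R] [AddCommGroup M] [Module R M]

theorem tmul_map_add_map_tmul_eq_zero_of_coderivation {Δ : M →ₗ[R] M ⊗[R] M} {h : M →ₗ[R] M}
    {e x : M} (hx : Δ e = e ⊗ₜ[R] x + x ⊗ₜ[R] e) (he : h e = 0)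
    (hΔ : h.rTensor M ∘ₗ Δ + h.lTensor M ∘ₗ Δ = Δ ∘ₗ h) :
    e ⊗ₜ[R] h x + h x ⊗ₜ[R] e = 0 := by
  have at_e : h.rTensor M (Δ e) + h.lTensor M (Δ e) = Δ (h e) := LinearMap.congr_fun hΔ e
  simpa [hx, he, add_comm] using at_e

theorem eq_neg_dual_smul_of_tmul_add_tmul_eq_zero {e y : M} {f : Module.Dual R M} (hf : f e = 1)
    (hy : e ⊗ₜ[R] y + y ⊗ₜ[R] e = 0) : y = -f y • e := by
  have contracted : y + f y • e = 0 := by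
    simpa [hf] using congrArg (TensorProduct.lid R M ∘ f.rTensor M) hy
  rw [neg_smul]
  exact eq_neg_of_add_eq_zero_left contracted

theorem two_mul_dual_eq_zero_of_tmul_add_tmul_eq_zero {e y : M} {f : Module.Dual R M}
    (hf : f e = 1) (hy : e ⊗ₜ[R] y + y ⊗ₜ[R] e = 0) : 2 * f y = 0 := by
  have self_eq_neg : f y = -f y := by
    simpa [hf] using congrArg f (eq_neg_dual_smul_of_tmul_add_tmul_eq_zero hf hy)
  linear_combination self_eq_neg

theorem one_cocycle_on_copairing_general {Δ : M →ₗ[R] M ⊗[R] M} {h : M →ₗ[R] M} {e x : M}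
    {f : Module.Dual R M} (hf : f e = 1) (hx : Δ e = e ⊗ₜ[R] x + x ⊗ₜ[R] e) (he : h e = 0)
    (hΔ : h.rTensor M ∘ₗ Δ + h.lTensor M ∘ₗ Δ = Δ ∘ₗ h) :
    (∃ α : R, h x = α • e ∧ 2 * α = 0) ∧ (IsLeftRegular (2 : R) → h x = 0) := by
  have symm_tmul_eq_zero : e ⊗ₜ[R] h x + h x ⊗ₜ[R] e = 0 :=
    tmul_map_add_map_tmul_eq_zero_of_coderivation hx he hΔ
  have hx_smul : h x = -f (h x) • e :=
    eq_neg_dual_smul_of_tmul_add_tmul_eq_zero hf symm_tmul_eq_zero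
  have two_torsion : 2 * -f (h x) = 0 := by
    rw [mul_neg, two_mul_dual_eq_zero_of_tmul_add_tmul_eq_zero hf symm_tmul_eq_zero, neg_zero]
  refine ⟨⟨_, hx_smul, two_torsion⟩, fun two_regular => ?_⟩
  rw [hx_smul, two_regular.mul_left_eq_zero_iff.mp two_torsion, zero_smul]

end PointedModule

variable {k A} in
theorem map_one_eq_zero_of_d11_eq_zero {h : A →ₗ[k] A} (h1 : d11 k A h = 0) : h 1 = 0 := by
  simpa [d11, mu] using LinearMap.congr_fun h1 (1 ⊗ₜ[k] 1)

/-- let `A` be a finite-dimensional `k`-algebra with `1 ≠ 0` carrying a Frobenius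
structure `Δ`, and suppose `Δ(1) = 1⊗x + x⊗1`. If `h` is a Frobenius 1-cocycle
(`d^{1,1}(h) = 0` and `d^{1,2}(h) = 0`), then `h(x) = α·1` for some `α ∈ k` with `2α = 0`;
in particular `h(x) = 0` when `char k ≠ 2`. -/
theorem one_cocycle_on_copairing (Δ : A →ₗ[k] A ⊗[k] A) (hΔ : IsFrobenius k A Δ)
    [FiniteDimensional k A] [Nontrivial A]
    (x : A) (hx : Δ 1 = (1 : A) ⊗ₜ[k] x + x ⊗ₜ[k] (1 : A))
    (h : A →ₗ[k] A) (h1 : d11 k A h = 0) (h2 : d12 k A Δ h = 0) :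
    (∃ α : k, h x = α • (1 : A) ∧ 2 * α = 0) ∧ (ringChar k ≠ 2 → h x = 0) := by
  obtain ⟨f, hf⟩ := Module.Projective.exists_dual_eq_one k (one_ne_zero : (1 : A) ≠ 0)
  exact (one_cocycle_on_copairing_general hf hx (map_one_eq_zero_of_d11_eq_zero h1)
    (sub_eq_zero.mp h2)).imp_right fun of_regular char_ne_two =>
      of_regular (IsRegular.of_ne_zero (Ring.two_ne_zero char_ne_two)).left
end
end

section
/- For the Frobenius algebra ℂ over ℝ with trigonometric comultiplication, the space of Frobenius 1-cocycles is trivial: if h : ℂ → ℂ is ℝ-linear and satisfies d^{1,1}(h) = 0 and d^{1,2}(h) = 0, then h = 0. In particular Z¹_f(ℂ;ℂ) = 0 and H¹_f(ℂ;ℂ) = 0. -/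
open TensorProduct

noncomputable section

variable (k A : Type*) [Field k] [Ring A] [Algebra k A]

section Leibniz

variable {k A}

theorem d11_tmul (h : A →ₗ[k] A) (x y : A) :
    d11 k A h (x ⊗ₜ[k] y) = h x * y + x * h y - h (x * y) := by
  simp only [d11, mu, LinearMap.sub_apply, LinearMap.add_apply, LinearMap.comp_apply,
    LinearMap.rTensor_tmul, LinearMap.lTensor_tmul, LinearMap.mul'_apply]

theorem d11_eq_zero_iff_leibniz {h : A →ₗ[k] A} :
    d11 k A h = 0 ↔ ∀ x y, h (x * y) = h x * y + x * h y := by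
  refine ⟨fun h_zero x y ↦ ?_, fun h_leibniz ↦ TensorProduct.ext' fun x y ↦ ?_⟩
  · rw [eq_comm, ← sub_eq_zero, ← d11_tmul, h_zero, LinearMap.zero_apply]
  · rw [d11_tmul, h_leibniz, sub_self, LinearMap.zero_apply]

end Leibniz

theorem subsingleton_derivation_of_formallyUnramified (R S M : Type*) [CommRing R] [CommRing S]
    [Algebra R S] [Algebra.FormallyUnramified R S] [AddCommGroup M] [Module R M] [Module S M]
    [IsScalarTower R S M] : Subsingleton (Derivation R S M) :=
  (KaehlerDifferential.linearMapEquivDerivation R S (M := M)).symm.injective.subsingleton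

theorem complex_Z1_trivial_general {K B : Type*} [Field K] [CommRing B] [Algebra K B]
    [Algebra.FormallyUnramified K B] (h : B →ₗ[K] B) (h1 : d11 K B h = 0) : h = 0 := by
  have h_leibniz (x y : B) : h (x * y) = x • h y + y • h x := by
    rw [d11_eq_zero_iff_leibniz.mp h1, smul_eq_mul, smul_eq_mul, mul_comm (h x), add_comm]
  have := subsingleton_derivation_of_formallyUnramified K B B
  exact congrArg Derivation.toLinearMap (Subsingleton.elim (Derivation.mk' h h_leibniz) 0)

/-- for the Frobenius algebra `ℂ` over `ℝ` with the trigonometric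
comultiplication (`Δ(1) = 1⊗1 − i⊗i`, `Δ(i) = i⊗1 + 1⊗i`), every Frobenius 1-cocycle
vanishes: `Z¹_f(ℂ;ℂ) = 0` (hence `H¹_f(ℂ;ℂ) = 0`). -/
theorem complex_Z1_trivial (Δ : ℂ →ₗ[ℝ] ℂ ⊗[ℝ] ℂ)
    (hΔ1 : Δ 1 = (1 : ℂ) ⊗ₜ[ℝ] (1 : ℂ) - Complex.I ⊗ₜ[ℝ] Complex.I)
    (hΔi : Δ Complex.I = Complex.I ⊗ₜ[ℝ] (1 : ℂ) + (1 : ℂ) ⊗ₜ[ℝ] Complex.I)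
    (h : ℂ →ₗ[ℝ] ℂ) (h1 : d11 ℝ ℂ h = 0) (h2 : d12 ℝ ℂ Δ h = 0) :
    h = 0 :=
  have := Algebra.FormallyUnramified.of_isSeparable ℝ ℂ
  complex_Z1_trivial_general h h1
end
end

section
/- For the group-algebra Frobenius algebra A = k[ℤ/2] over a field k, the space Z²_f(A;A) of Frobenius 2-cocycles — the k-subspace of Hom_k(A⊗A, A) × Hom_k(A, A⊗A) consisting of pairs (φ₁,φ₂) with d^{2,1}(φ₁) = 0, d^{2,2}_{(1)}(φ₁,φ₂) = 0 and d^{2,3}(φ₂) = 0 — has dimension 6 over k. -/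
open TensorProduct

noncomputable section

variable (k A : Type*) [Field k] [Ring A] [Algebra k A]

/-- The group algebra `k[ℤ/2]`. -/
abbrev GroupAlg (K : Type*) [Field K] := MonoidAlgebra K (Multiplicative (ZMod 2))

/-- The generator `g` of `ℤ/2` inside `k[ℤ/2]`. -/
def gElt (K : Type*) [Field K] : GroupAlg K :=
  MonoidAlgebra.of K (Multiplicative (ZMod 2)) (Multiplicative.ofAdd (1 : ZMod 2))

/-!
Let `ε` be the Frobenius form of a Frobenius algebra `A` with comultiplication `Δ`. Contracting
the right leg of `φ₂ : A → A ⊗ A` against `ε` turns it into a bilinear map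
`r(a, y) = (id ⊗ ε(· y)) (φ₂ a)`, and no information is lost because `ε` is nondegenerate.
If `φ₁` is a Hochschild cocycle, then `d^{2,2}_{(1)}(φ₁, φ₂) = 0` says that `r - φ₁` is left
`A`-linear in its first variable, and then `d^{2,3}(φ₂) = 0` says that `ε(r(a, y)) = l(a y)` for
a linear form `l` on `A`. Such an `l` can be prescribed freely, and by nondegeneracy `(φ₁, l)`
determines `r`. Hence `Z²_f(A; A) ≃ Z²(A; A) × A*`.

If `A` has a basis `1, x`, then a Hochschild cocycle is determined by its values at `(1, 1)` and
`(x, x)`, which are arbitrary, so that `Z²_f(A; A)` has dimension `4 + 2`.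
-/

theorem exists_linearIndependent_span_eq {D V : Type*} [DivisionRing D] [AddCommGroup V]
    [Module D V] (S : Submodule D V) {n : ℕ} (hn : n ≠ 0) (hS : Module.finrank D S = n) :
    ∃ f : Fin n → V, LinearIndependent D f ∧ Submodule.span D (Set.range f) = S := by
  have : Module.Finite D S := Module.finite_of_finrank_pos (by lia)
  let b := Module.finBasisOfFinrankEq D S hS
  refine ⟨S.subtype ∘ b, b.linearIndependent.map' _ S.ker_subtype, ?_⟩
  rw [Set.range_comp, Submodule.span_image, b.span_eq, Submodule.map_subtype_top]

section Slices

variable {R A M N : Type*} [CommSemiring R] [Semiring A] [Algebra R A]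
  [AddCommMonoid M] [Module R M] [AddCommMonoid N] [Module R N]

/-- The contraction `M ⊗ A → Hom(A, M)`, `m ⊗ a ↦ (y ↦ ε(a y) m)`, of a right tensor leg
against a linear form `ε` on `A`. -/
def sliceRight (ε : A →ₗ[R] R) : M ⊗[R] A →ₗ[R] A →ₗ[R] M :=
  TensorProduct.lift (LinearMap.smulRightₗ ∘ₗ (LinearMap.mul R A).compr₂ ε).flip

/-- The contraction `A ⊗ M → Hom(A, M)`, `a ⊗ m ↦ (x ↦ ε(x a) m)`, of a left tensor leg
against a linear form `ε` on `A`. -/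
def sliceLeft (ε : A →ₗ[R] R) : A ⊗[R] M →ₗ[R] A →ₗ[R] M :=
  TensorProduct.lift (LinearMap.smulRightₗ ∘ₗ ((LinearMap.mul R A).compr₂ ε).flip)

@[simp]
theorem sliceRight_tmul (ε : A →ₗ[R] R) (m : M) (a y : A) :
    sliceRight ε (m ⊗ₜ[R] a) y = ε (a * y) • m := rfl

@[simp]
theorem sliceLeft_tmul (ε : A →ₗ[R] R) (a x : A) (m : M) :
    sliceLeft ε (a ⊗ₜ[R] m) x = ε (x * a) • m := rfl

theorem sliceRight_rTensor (ε : A →ₗ[R] R) (f : M →ₗ[R] N) (t : M ⊗[R] A) (y : A) :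
    sliceRight ε (f.rTensor A t) y = f (sliceRight ε t y) := by
  induction t with
  | zero => simp
  | tmul m a => simp
  | add t u ht hu => simp only [map_add, LinearMap.add_apply, ht, hu]

theorem sliceRight_assoc_symm (ε : A →ₗ[R] R) (t : M ⊗[R] (N ⊗[R] A)) (y : A) :
    sliceRight ε ((TensorProduct.assoc R M N A).symm t) y =
      ((sliceRight ε).flip y).lTensor M t := by
  suffices h : (sliceRight ε).flip y ∘ₗ (TensorProduct.assoc R M N A).symm.toLinearMap =
      ((sliceRight ε).flip y).lTensor M from LinearMap.congr_fun h t
  ext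
  simp

theorem sliceRight_lTensor_mulRight (ε : A →ₗ[R] R) (t : M ⊗[R] A) (y z : A) :
    sliceRight ε ((LinearMap.mulRight R z).lTensor M t) y = sliceRight ε t (z * y) := by
  induction t with
  | zero => simp
  | tmul m a => simp [mul_assoc]
  | add t u ht hu => simp only [map_add, LinearMap.add_apply, ht, hu]

theorem sliceRight_eq_rid_lTensor (ε : A →ₗ[R] R) (t : M ⊗[R] A) (y : A) :
    sliceRight ε t y =
      TensorProduct.rid R M ((((LinearMap.mul R A).compr₂ ε).flip y).lTensor M t) := by
  induction t with
  | zero => simp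
  | tmul m a => simp
  | add t u ht hu => simp only [map_add, LinearMap.add_apply, ht, hu]

theorem apply_mul_rid_lTensor (ε : A →ₗ[R] R) (g : M →ₗ[R] R) (t : A ⊗[R] M) (x : A) :
    ε (x * TensorProduct.rid R A (g.lTensor A t)) = g (sliceLeft ε t x) := by
  induction t with
  | zero => simp
  | tmul a m => simp [mul_comm]
  | add t u ht hu => simp only [map_add, LinearMap.add_apply, mul_add, ht, hu]

theorem apply_mul_sliceRight_lTensor (ε : A →ₗ[R] R) (f : M →ₗ[R] A) (t : A ⊗[R] M) (x y : A) :
    ε (x * sliceRight ε (f.lTensor A t) y) = ε (f (sliceLeft ε t x) * y) := by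
  induction t with
  | zero => simp
  | tmul a m => simp [mul_comm]
  | add t u ht hu => simp only [map_add, LinearMap.add_apply, mul_add, add_mul, ht, hu]

theorem rTensor_sliceRight_tmul (ε : A →ₗ[R] R) (m : M) (a : A) (t : A ⊗[R] A) :
    (sliceRight ε (m ⊗ₜ[R] a)).rTensor A t = m ⊗ₜ[R] sliceLeft ε t a := by
  induction t with
  | zero => simp
  | tmul b c => simp [smul_tmul]
  | add t u ht hu => simp only [map_add, LinearMap.add_apply, tmul_add, ht, hu]

/-- `ε` is a Frobenius form on `A` with Frobenius comultiplication `Δ`. The axioms are stated in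
contracted form: pairing the left leg of `Δ a` with `ε(x ·)` gives `x a`, and pairing its right
leg with `ε(· y)` gives `a y`. -/
structure IsFrobeniusForm (ε : A →ₗ[R] R) (Δ : A →ₗ[R] A ⊗[R] A) : Prop where
  sliceLeft_comp : sliceLeft ε ∘ₗ Δ = (LinearMap.mul R A).flip
  sliceRight_comp : sliceRight ε ∘ₗ Δ = LinearMap.mul R A

namespace IsFrobeniusForm

variable {ε : A →ₗ[R] R} {Δ : A →ₗ[R] A ⊗[R] A}

theorem sliceLeft_apply (hΔ : IsFrobeniusForm ε Δ) (a x : A) : sliceLeft ε (Δ a) x = x * a :=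
  LinearMap.congr_fun₂ hΔ.sliceLeft_comp a x

theorem sliceRight_apply (hΔ : IsFrobeniusForm ε Δ) (a y : A) : sliceRight ε (Δ a) y = a * y :=
  LinearMap.congr_fun₂ hΔ.sliceRight_comp a y

/-- The isomorphism `M ⊗ A ≃ Hom(A, M)` given by contraction with a Frobenius form; its inverse
feeds a map into the left leg of the Casimir element `Δ 1`. -/
def sliceEquiv (hΔ : IsFrobeniusForm ε Δ) : M ⊗[R] A ≃ₗ[R] A →ₗ[R] M :=
  LinearEquiv.ofLinearMap (sliceRight ε) ((LinearMap.rTensorHom A).flip (Δ 1))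
    (by ext f y; simp [sliceRight_rTensor, hΔ.sliceRight_apply])
    (by ext m a; simp [rTensor_sliceRight_tmul, hΔ.sliceLeft_apply])

/-- The isomorphism `A ≃ A*`, `a ↦ ε(· a)`, given by a Frobenius form. -/
def dualEquiv (hΔ : IsFrobeniusForm ε Δ) : A ≃ₗ[R] Module.Dual R A :=
  LinearEquiv.ofLinearMap ((LinearMap.mul R A).compr₂ ε).flip
    ((TensorProduct.rid R A).toLinearMap ∘ₗ (LinearMap.lTensorHom A).flip (Δ 1))
    (by ext g x; simp [apply_mul_rid_lTensor, hΔ.sliceLeft_apply])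
    (by ext a; simp [← sliceRight_eq_rid_lTensor, hΔ.sliceRight_apply])

@[simp]
theorem sliceEquiv_apply (hΔ : IsFrobeniusForm ε Δ) (t : M ⊗[R] A) :
    hΔ.sliceEquiv t = sliceRight ε t := rfl

@[simp]
theorem dualEquiv_apply (hΔ : IsFrobeniusForm ε Δ) (a x : A) :
    hΔ.dualEquiv a x = ε (x * a) := rfl

theorem sliceRight_injective (hΔ : IsFrobeniusForm ε Δ) :
    Function.Injective (sliceRight (M := M) ε) :=
  hΔ.sliceEquiv.injective

end IsFrobeniusForm

end Slices

section Cocycles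

variable {k A}

theorem d21_eq_zero_iff {φ : A ⊗[k] A →ₗ[k] A} :
    d21 k A φ = 0 ↔ ∀ a b c : A,
      φ (a ⊗ₜ b) * c + φ ((a * b) ⊗ₜ c) = a * φ (b ⊗ₜ c) + φ (a ⊗ₜ (b * c)) := by
  have apply_tmul (a b c : A) : d21 k A φ ((a ⊗ₜ b) ⊗ₜ c) =
      φ (a ⊗ₜ b) * c + φ ((a * b) ⊗ₜ c) - (a * φ (b ⊗ₜ c) + φ (a ⊗ₜ (b * c))) := by
    simp [d21, mu, asso, sub_sub]
  refine ⟨fun h a b c => sub_eq_zero.mp ?_, fun h => TensorProduct.ext_threefold fun a b c => ?_⟩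
  · rw [← apply_tmul, h, LinearMap.zero_apply]
  · rw [apply_tmul, sub_eq_zero.mpr (h a b c), LinearMap.zero_apply]

variable {ε : A →ₗ[k] k} {Δ : A →ₗ[k] A ⊗[k] A}
  {φ₁ : A ⊗[k] A →ₗ[k] A} {φ₂ : A →ₗ[k] A ⊗[k] A}

theorem IsFrobeniusForm.sliceRight_d221 (hΔ : IsFrobeniusForm ε Δ) (a b c : A) :
    sliceRight ε (d221 k A Δ φ₁ φ₂ (a ⊗ₜ b)) c =
      φ₁ (a ⊗ₜ b) * c + sliceRight ε (φ₂ (a * b)) c -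
        (φ₁ (a ⊗ₜ (b * c)) + a * sliceRight ε (φ₂ b) c) := by
  simp [d221, mu, asso, sliceRight_rTensor, sliceRight_assoc_symm, hΔ.sliceRight_apply, sub_sub]

theorem IsFrobeniusForm.d221_eq_zero_iff (hΔ : IsFrobeniusForm ε Δ) :
    d221 k A Δ φ₁ φ₂ = 0 ↔ ∀ a b c : A,
      φ₁ (a ⊗ₜ b) * c + sliceRight ε (φ₂ (a * b)) c =
        φ₁ (a ⊗ₜ (b * c)) + a * sliceRight ε (φ₂ b) c := by
  refine ⟨fun h a b c => sub_eq_zero.mp ?_, fun h => TensorProduct.ext' fun a b =>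
    hΔ.sliceRight_injective (LinearMap.ext fun c => ?_)⟩
  · rw [← hΔ.sliceRight_d221, h]
    simp
  · rw [hΔ.sliceRight_d221, sub_eq_zero.mpr (h a b c)]
    simp

theorem IsFrobeniusForm.sliceRight_d23 (hΔ : IsFrobeniusForm ε Δ) (b c : A) :
    sliceRight ε (d23 k A Δ φ₂ b) c =
      φ₂ (b * c) + Δ (sliceRight ε (φ₂ b) c)
        - ((sliceRight ε).flip c ∘ₗ φ₂).lTensor A (Δ b)
        - (LinearMap.mulRight k c).lTensor A (φ₂ b) := by
  have sliceRight_comul : (sliceRight ε).flip c ∘ₗ Δ = LinearMap.mulRight k c :=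
    LinearMap.ext fun a => hΔ.sliceRight_apply a c
  simp [d23, asso, sliceRight_rTensor, sliceRight_assoc_symm, hΔ.sliceRight_apply,
    ← LinearMap.lTensor_comp_apply, sliceRight_comul]

theorem IsFrobeniusForm.apply_mul_sliceRight_sliceRight_d23 (hΔ : IsFrobeniusForm ε Δ)
    (x b c y : A) :
    ε (x * sliceRight ε (sliceRight ε (d23 k A Δ φ₂ b) c) y) =
      ε (x * sliceRight ε (φ₂ (b * c)) y + x * (sliceRight ε (φ₂ b) c * y)
        - sliceRight ε (φ₂ (x * b)) c * y - x * sliceRight ε (φ₂ b) (c * y)) := by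
  simp [hΔ.sliceRight_d23, hΔ.sliceRight_apply, mul_add, mul_sub, apply_mul_sliceRight_lTensor,
    hΔ.sliceLeft_apply, sliceRight_lTensor_mulRight]

theorem IsFrobeniusForm.d23_eq_zero_iff (hΔ : IsFrobeniusForm ε Δ) :
    d23 k A Δ φ₂ = 0 ↔ ∀ x b c y : A,
      ε (x * sliceRight ε (φ₂ (b * c)) y + x * (sliceRight ε (φ₂ b) c * y)
        - sliceRight ε (φ₂ (x * b)) c * y - x * sliceRight ε (φ₂ b) (c * y)) = 0 := by
  refine ⟨fun h x b c y => ?_, fun h => ?_⟩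
  · rw [← hΔ.apply_mul_sliceRight_sliceRight_d23, h]
    simp
  · refine LinearMap.ext fun b => hΔ.sliceRight_injective <| LinearMap.ext fun c =>
      hΔ.sliceRight_injective <| LinearMap.ext fun y => hΔ.dualEquiv.injective <|
        LinearMap.ext fun x => ?_
    rw [hΔ.dualEquiv_apply, hΔ.apply_mul_sliceRight_sliceRight_d23, h]
    simp

theorem IsFrobeniusForm.d23_eq_zero_iff_of_d221_eq_zero (hΔ : IsFrobeniusForm ε Δ)
    (h : d221 k A Δ φ₁ φ₂ = 0) :
    d23 k A Δ φ₂ = 0 ↔ ∀ a b c : A,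
      ε (sliceRight ε (φ₂ (a * b)) c) = ε (sliceRight ε (φ₂ a) (b * c)) := by
  have defect (x b c y : A) :
      x * sliceRight ε (φ₂ (b * c)) y + x * (sliceRight ε (φ₂ b) c * y)
        - sliceRight ε (φ₂ (x * b)) c * y - x * sliceRight ε (φ₂ b) (c * y) =
      sliceRight ε (φ₂ (x * b * c)) y - sliceRight ε (φ₂ (x * b)) (c * y) := by
    rw [hΔ.d221_eq_zero_iff] at h
    have h₁ := h x (b * c) y
    have h₂ := h x b (c * y)
    have h₃ := congrArg (· * y) (h x b c)
    simp only [add_mul, mul_assoc] at h₁ h₂ h₃ ⊢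
    rw [← eq_sub_iff_add_eq'] at h₁ h₂ h₃
    rw [h₁, h₂, h₃]
    abel
  simp only [hΔ.d23_eq_zero_iff, defect, map_sub, sub_eq_zero]
  exact ⟨fun h a b c => by simpa only [mul_one] using h a 1 b c, fun h x b c y => h (x * b) c y⟩

theorem IsFrobeniusForm.d221_eq_zero_iff_of_d21_eq_zero (hΔ : IsFrobeniusForm ε Δ)
    (h : d21 k A φ₁ = 0) :
    d221 k A Δ φ₁ φ₂ = 0 ↔ ∀ a c : A,
      sliceRight ε (φ₂ a) c - φ₁ (a ⊗ₜ c) = a * (sliceRight ε (φ₂ 1) c - φ₁ (1 ⊗ₜ c)) := by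
  have iff_linear (a b c : A) :
      φ₁ (a ⊗ₜ b) * c + sliceRight ε (φ₂ (a * b)) c =
          φ₁ (a ⊗ₜ (b * c)) + a * sliceRight ε (φ₂ b) c ↔
        sliceRight ε (φ₂ (a * b)) c - φ₁ ((a * b) ⊗ₜ c) =
          a * (sliceRight ε (φ₂ b) c - φ₁ (b ⊗ₜ c)) := by
    have h' := d21_eq_zero_iff.mp h a b c
    rw [mul_sub, ← sub_eq_zero, ← sub_eq_zero (b := _ - _)]
    refine Eq.congr ?_ rfl
    linear_combination (norm := abel) h'
  simp only [hΔ.d221_eq_zero_iff, iff_linear]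
  refine ⟨fun h a c => by simpa only [mul_one] using h a 1 c, fun h a b c => ?_⟩
  rw [h (a * b), h b, mul_assoc]

theorem d21_add (φ φ' : A ⊗[k] A →ₗ[k] A) : d21 k A (φ + φ') = d21 k A φ + d21 k A φ' := by
  simp only [d21, LinearMap.rTensor_add, LinearMap.lTensor_add, LinearMap.comp_add,
    LinearMap.add_comp]
  abel

theorem d21_smul (r : k) (φ : A ⊗[k] A →ₗ[k] A) : d21 k A (r • φ) = r • d21 k A φ := by
  simp only [d21, LinearMap.rTensor_smul, LinearMap.lTensor_smul, LinearMap.comp_smul,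
    LinearMap.smul_comp, smul_add, smul_sub]

theorem d221_add (Δ : A →ₗ[k] A ⊗[k] A) (φ₁ φ₁' : A ⊗[k] A →ₗ[k] A)
    (φ₂ φ₂' : A →ₗ[k] A ⊗[k] A) :
    d221 k A Δ (φ₁ + φ₁') (φ₂ + φ₂') = d221 k A Δ φ₁ φ₂ + d221 k A Δ φ₁' φ₂' := by
  simp only [d221, LinearMap.rTensor_add, LinearMap.lTensor_add, LinearMap.comp_add,
    LinearMap.add_comp]
  abel

theorem d221_smul (Δ : A →ₗ[k] A ⊗[k] A) (r : k) (φ₁ : A ⊗[k] A →ₗ[k] A)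
    (φ₂ : A →ₗ[k] A ⊗[k] A) :
    d221 k A Δ (r • φ₁) (r • φ₂) = r • d221 k A Δ φ₁ φ₂ := by
  simp only [d221, LinearMap.rTensor_smul, LinearMap.lTensor_smul, LinearMap.comp_smul,
    LinearMap.smul_comp, smul_add, smul_sub]

theorem d23_add (Δ φ₂ φ₂' : A →ₗ[k] A ⊗[k] A) :
    d23 k A Δ (φ₂ + φ₂') = d23 k A Δ φ₂ + d23 k A Δ φ₂' := by
  simp only [d23, LinearMap.rTensor_add, LinearMap.lTensor_add, LinearMap.comp_add,
    LinearMap.add_comp]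
  abel

theorem d23_smul (Δ : A →ₗ[k] A ⊗[k] A) (r : k) (φ₂ : A →ₗ[k] A ⊗[k] A) :
    d23 k A Δ (r • φ₂) = r • d23 k A Δ φ₂ := by
  simp only [d23, LinearMap.rTensor_smul, LinearMap.lTensor_smul, LinearMap.comp_smul,
    LinearMap.smul_comp]
  module

variable (k A) in
/-- The space `Z²(A; A)` of Hochschild 2-cocycles. -/
def hochschildCocycles : Submodule k (A ⊗[k] A →ₗ[k] A) where
  carrier := {φ | d21 k A φ = 0}
  add_mem' {φ φ'} h h' := by
    rw [Set.mem_ofPred_eq] at h h' ⊢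
    rw [d21_add, h, h', add_zero]
  zero_mem' := by simp [d21]
  smul_mem' r φ h := by
    rw [Set.mem_ofPred_eq] at h ⊢
    rw [d21_smul, h, smul_zero]

/-- The space `Z²_f(A; A)` of Frobenius 2-cocycles. -/
def frobeniusCocycles (Δ : A →ₗ[k] A ⊗[k] A) :
    Submodule k ((A ⊗[k] A →ₗ[k] A) × (A →ₗ[k] A ⊗[k] A)) where
  carrier := {p | d21 k A p.1 = 0 ∧ d221 k A Δ p.1 p.2 = 0 ∧ d23 k A Δ p.2 = 0}
  add_mem' {p p'} := by
    rintro ⟨h₁, h₂, h₃⟩ ⟨h₁', h₂', h₃'⟩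
    refine ⟨?_, ?_, ?_⟩
    · rw [Prod.fst_add, d21_add, h₁, h₁', add_zero]
    · rw [Prod.fst_add, Prod.snd_add, d221_add, h₂, h₂', add_zero]
    · rw [Prod.snd_add, d23_add, h₃, h₃', add_zero]
  zero_mem' := ⟨by simp [d21], by simp [d221], by ext; simp [d23]⟩
  smul_mem' r p := by
    rintro ⟨h₁, h₂, h₃⟩
    refine ⟨?_, ?_, ?_⟩
    · rw [Prod.smul_fst, d21_smul, h₁, smul_zero]
    · rw [Prod.smul_fst, Prod.smul_snd, d221_smul, h₂, smul_zero]
    · rw [Prod.smul_snd, d23_smul, h₃, smul_zero]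

/-- The Hochschild cocycle `φ₁` of a Frobenius cocycle `(φ₁, φ₂)`, together with the linear form
`y ↦ (ε ⊗ ε(· y)) (φ₂ 1)`. -/
def hochschildCocycleProdForm (ε : A →ₗ[k] k) (Δ : A →ₗ[k] A ⊗[k] A) :
    frobeniusCocycles Δ →ₗ[k] hochschildCocycles k A × Module.Dual k A where
  toFun p := (⟨p.1.1, p.2.1⟩, ε ∘ₗ sliceRight ε (p.1.2 1))
  map_add' p q := by ext <;> simp
  map_smul' r p := by ext <;> simp

theorem IsFrobeniusForm.hochschildCocycleProdForm_injective (hΔ : IsFrobeniusForm ε Δ) :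
    Function.Injective (hochschildCocycleProdForm ε Δ) := by
  rw [injective_iff_map_eq_zero]
  rintro ⟨⟨φ₁, φ₂⟩, h₁, h₂, h₃⟩ h
  obtain rfl : φ₁ = 0 := congrArg (fun q => (q.1 : A ⊗[k] A →ₗ[k] A)) h
  have form_eq_zero (y : A) : ε (sliceRight ε (φ₂ 1) y) = 0 :=
    LinearMap.congr_fun (congrArg Prod.snd h) y
  have slice_eq_mul := (hΔ.d221_eq_zero_iff_of_d21_eq_zero h₁).mp h₂
  have form_balanced := (hΔ.d23_eq_zero_iff_of_d221_eq_zero h₂).mp h₃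
  simp only [LinearMap.zero_apply, sub_zero] at slice_eq_mul
  have slice_one (y : A) : sliceRight ε (φ₂ 1) y = 0 := by
    refine hΔ.dualEquiv.injective (LinearMap.ext fun x => ?_)
    rw [hΔ.dualEquiv_apply, ← slice_eq_mul, ← one_mul x, form_balanced, form_eq_zero, map_zero,
      LinearMap.zero_apply]
  obtain rfl : φ₂ = 0 := LinearMap.ext fun a => hΔ.sliceRight_injective <| LinearMap.ext fun y => by
    rw [slice_eq_mul, slice_one, mul_zero, LinearMap.zero_apply, map_zero, LinearMap.zero_apply]
  rfl

theorem IsFrobeniusForm.hochschildCocycleProdForm_surjective (hΔ : IsFrobeniusForm ε Δ) :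
    Function.Surjective (hochschildCocycleProdForm ε Δ) := by
  rintro ⟨⟨φ₁, h₁⟩, l⟩
  let T : A →ₗ[k] A := hΔ.dualEquiv.symm.toLinearMap ∘ₗ
    ((LinearMap.mul k A).compr₂ l - (TensorProduct.mk k A A).compr₂ (ε ∘ₗ φ₁)).flip
  have apply_mul_T (x y : A) : ε (x * T y) = l (x * y) - ε (φ₁ (x ⊗ₜ y)) := by
    rw [← hΔ.dualEquiv_apply]
    simp [T]
  let φ₂ : A →ₗ[k] A ⊗[k] A := hΔ.sliceEquiv.symm.toLinearMap ∘ₗ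
    ((TensorProduct.mk k A A).compr₂ φ₁ + (LinearMap.mul k A).compl₂ T)
  have slice_φ₂ (a y : A) : sliceRight ε (φ₂ a) y = φ₁ (a ⊗ₜ y) + a * T y := by
    rw [← hΔ.sliceEquiv_apply, LinearMap.comp_apply, LinearEquiv.coe_coe,
      LinearEquiv.apply_symm_apply]
    simp
  have form_slice (a y : A) : ε (sliceRight ε (φ₂ a) y) = l (a * y) := by
    rw [slice_φ₂, map_add, apply_mul_T, add_sub_cancel]
  have h₂ : d221 k A Δ φ₁ φ₂ = 0 :=
    (hΔ.d221_eq_zero_iff_of_d21_eq_zero h₁).mpr fun a c => by simp [slice_φ₂]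
  have h₃ : d23 k A Δ φ₂ = 0 :=
    (hΔ.d23_eq_zero_iff_of_d221_eq_zero h₂).mpr fun a b c => by simp only [form_slice, mul_assoc]
  refine ⟨⟨(φ₁, φ₂), h₁, h₂, h₃⟩, Prod.ext rfl (LinearMap.ext fun y => ?_)⟩
  exact (form_slice 1 y).trans (congrArg l (one_mul y))

/-- `Z²_f(A; A) ≃ Z²(A; A) × A*` for a Frobenius algebra `A`. -/
def IsFrobeniusForm.cocyclesEquiv (hΔ : IsFrobeniusForm ε Δ) :
    frobeniusCocycles Δ ≃ₗ[k] hochschildCocycles k A × Module.Dual k A :=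
  .ofBijective (hochschildCocycleProdForm ε Δ)
    ⟨hΔ.hochschildCocycleProdForm_injective, hΔ.hochschildCocycleProdForm_surjective⟩

end Cocycles

section BasisOneX

variable {R A : Type*} [CommSemiring R] [Semiring A] [Algebra R A] {B : Module.Basis (Fin 2) R A}

theorem coord_zero_smul_one_add (hB : B 0 = 1) (a : A) :
    B.coord 0 a • 1 + B.coord 1 a • B 1 = a := by
  have h := B.sum_repr a
  rwa [Fin.sum_univ_two, hB] at h

theorem commute_of_basis_zero_eq_one (hB : B 0 = 1) (a b : A) : Commute a b := by
  have commute_basis_one (c : A) : Commute c (B 1) := by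
    rw [← coord_zero_smul_one_add hB c]
    exact ((Commute.one_left _).smul_left _).add_left ((Commute.refl _).smul_left _)
  rw [← coord_zero_smul_one_add hB b]
  exact ((Commute.one_right _).smul_right _).add_right ((commute_basis_one a).smul_right _)

theorem coord_one_mul (hB : B 0 = 1) (a b : A) :
    B.coord 1 (a * b) = B.coord 0 a * B.coord 1 b + B.coord 1 a * B.coord 0 b +
      B.coord 1 a * B.coord 1 b * B.coord 1 (B 1 * B 1) := by
  have coord_one_one : B.coord 1 1 = 0 := by simp [← hB]
  have mul_eq : a * b = (B.coord 0 a * B.coord 0 b) • 1 +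
      (B.coord 0 a * B.coord 1 b + B.coord 1 a * B.coord 0 b) • B 1 +
      (B.coord 1 a * B.coord 1 b) • (B 1 * B 1) := by
    conv_lhs => rw [← coord_zero_smul_one_add hB a, ← coord_zero_smul_one_add hB b]
    simp only [add_mul, mul_add, smul_mul_assoc, mul_smul_comm, one_mul, mul_one]
    module
  rw [mul_eq, map_add, map_add, map_smul, map_smul, map_smul, coord_one_one]
  simp

end BasisOneX

section Quadratic

variable {k A}

theorem exists_basis_zero_eq_one (hA : Module.finrank k A = 2) :
    ∃ B : Module.Basis (Fin 2) k A, B 0 = 1 := by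
  have : Nontrivial A := Module.nontrivial_of_finrank_pos (R := k) (by lia)
  obtain ⟨x, hx⟩ := exists_linearIndependent_pair_of_one_lt_finrank (R := k) (M := A)
    (by lia) one_ne_zero
  exact ⟨basisOfLinearIndependentOfCardEqFinrank hx (by simp [hA]), by simp⟩

theorem apply_one_tmul_of_d21_eq_zero {φ : A ⊗[k] A →ₗ[k] A} (h : d21 k A φ = 0) (a : A) :
    φ (1 ⊗ₜ a) = φ (1 ⊗ₜ 1) * a := by
  simpa using (d21_eq_zero_iff.mp h 1 1 a).symm

theorem apply_tmul_one_of_d21_eq_zero {φ : A ⊗[k] A →ₗ[k] A} (h : d21 k A φ = 0) (a : A) :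
    φ (a ⊗ₜ 1) = a * φ (1 ⊗ₜ 1) := by
  simpa using d21_eq_zero_iff.mp h a 1 1

theorem d21_mu_comp_rTensor_mulRight (p : A) :
    d21 k A (mu k A ∘ₗ (LinearMap.mulRight k p).rTensor A) = 0 :=
  d21_eq_zero_iff.mpr fun a b c => by simp [mu, mul_assoc, add_comm]

variable {B : Module.Basis (Fin 2) k A}

/-- For a basis `1, x` of `A`, the bilinear map that sends `(x, x)` to `s` and vanishes as soon
as one argument is `1`. -/
def squareCochain (B : Module.Basis (Fin 2) k A) (s : A) : A ⊗[k] A →ₗ[k] A :=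
  TensorProduct.lift
    (((LinearMap.mul k k).compl₁₂ (B.coord 1) (B.coord 1)).compr₂ (LinearMap.toSpanSingleton k A s))

theorem squareCochain_tmul (s a b : A) :
    squareCochain B s (a ⊗ₜ b) = (B.coord 1 a * B.coord 1 b) • s := rfl

theorem d21_squareCochain (hB : B 0 = 1) (s : A) : d21 k A (squareCochain B s) = 0 := by
  refine d21_eq_zero_iff.mpr fun a b c => ?_
  have mul_s_eq (u : A) : u * s = B.coord 0 u • s + B.coord 1 u • (B 1 * s) := by
    conv_lhs => rw [← coord_zero_smul_one_add hB u]
    rw [add_mul, smul_mul_assoc, smul_mul_assoc, one_mul]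
  rw [squareCochain_tmul, squareCochain_tmul, squareCochain_tmul, squareCochain_tmul,
    smul_mul_assoc, mul_smul_comm, (commute_of_basis_zero_eq_one hB s c).eq, mul_s_eq a, mul_s_eq c,
    coord_one_mul hB a b, coord_one_mul hB b c]
  module

/-- Evaluation of Hochschild 2-cocycles at `(1, 1)` and `(x, x)`. -/
def evalOneSquare (x : A) : hochschildCocycles k A →ₗ[k] A × A where
  toFun φ := (φ.1 (1 ⊗ₜ 1), φ.1 (x ⊗ₜ x))
  map_add' _ _ := rfl
  map_smul' _ _ := rfl

theorem evalOneSquare_injective (hB : B 0 = 1) :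
    Function.Injective (evalOneSquare (k := k) (B 1)) := by
  rw [injective_iff_map_eq_zero]
  rintro ⟨φ, hφ⟩ h
  obtain ⟨apply_one, apply_square⟩ := Prod.mk.inj h
  refine Subtype.ext ((B.tensorProduct B).ext ?_)
  rintro ⟨i, j⟩
  rw [Module.Basis.tensorProduct_apply]
  have apply_one_tmul (a : A) : φ (1 ⊗ₜ a) = 0 := by
    rw [apply_one_tmul_of_d21_eq_zero hφ, apply_one, zero_mul]
  have apply_tmul_one (a : A) : φ (a ⊗ₜ 1) = 0 := by
    rw [apply_tmul_one_of_d21_eq_zero hφ, apply_one, mul_zero]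
  fin_cases i <;> fin_cases j <;> simp [hB, apply_one_tmul, apply_tmul_one, apply_square]

theorem evalOneSquare_surjective (hB : B 0 = 1) :
    Function.Surjective (evalOneSquare (k := k) (B 1)) := by
  rintro ⟨p, q⟩
  let ψ : hochschildCocycles k A :=
    ⟨mu k A ∘ₗ (LinearMap.mulRight k p).rTensor A, d21_mu_comp_rTensor_mulRight p⟩
  let χ : hochschildCocycles k A :=
    ⟨squareCochain B (q - B 1 * p * B 1), d21_squareCochain hB _⟩
  have coord_one_one : B.coord 1 1 = 0 := by simp [← hB]
  refine ⟨ψ + χ, Prod.ext ?_ ?_⟩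
  · simp [evalOneSquare, ψ, χ, mu, squareCochain_tmul, coord_one_one]
  · simp [evalOneSquare, ψ, χ, mu, squareCochain_tmul]

theorem finrank_hochschildCocycles_of_finrank_eq_two (hA : Module.finrank k A = 2) :
    Module.finrank k (hochschildCocycles k A) = 4 := by
  have : Module.Finite k A := Module.finite_of_finrank_pos (by lia)
  obtain ⟨B, hB⟩ := exists_basis_zero_eq_one hA
  rw [(LinearEquiv.ofBijective (evalOneSquare (k := k) (B 1))
    ⟨evalOneSquare_injective hB, evalOneSquare_surjective hB⟩).finrank_eq, Module.finrank_prod, hA]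

variable {ε : A →ₗ[k] k} {Δ : A →ₗ[k] A ⊗[k] A}

theorem IsFrobeniusForm.finrank_frobeniusCocycles [Module.Finite k A] (hΔ : IsFrobeniusForm ε Δ) :
    Module.finrank k (frobeniusCocycles Δ) =
      Module.finrank k (hochschildCocycles k A) + Module.finrank k A := by
  -- Instance search fails to identify the additive structure of the subspace as a group.
  have : Module.Free k (hochschildCocycles k A) :=
    @Module.Free.of_divisionRing k _ _ (hochschildCocycles k A).addCommGroup _
  rw [hΔ.cocyclesEquiv.finrank_eq, Module.finrank_prod, Subspace.dual_finrank_eq]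

theorem groupAlgebra_Z2_dim_six_general (hΔ : IsFrobeniusForm ε Δ)
    (hA : Module.finrank k A = 2) :
    ∃ f : Fin 6 → (A ⊗[k] A →ₗ[k] A) × (A →ₗ[k] A ⊗[k] A),
      LinearIndependent k f ∧
      ∀ p : (A ⊗[k] A →ₗ[k] A) × (A →ₗ[k] A ⊗[k] A),
        (d21 k A p.1 = 0 ∧ d221 k A Δ p.1 p.2 = 0 ∧ d23 k A Δ p.2 = 0) ↔
        p ∈ Submodule.span k (Set.range f) := by
  have : Module.Finite k A := Module.finite_of_finrank_pos (by lia)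
  have finrank_eq : Module.finrank k (frobeniusCocycles Δ) = 6 := by
    rw [hΔ.finrank_frobeniusCocycles, finrank_hochschildCocycles_of_finrank_eq_two hA, hA]
  obtain ⟨f, hf, span_eq⟩ := exists_linearIndependent_span_eq _ (by lia) finrank_eq
  exact ⟨f, hf, fun p => (SetLike.ext_iff.mp span_eq p).symm⟩

end Quadratic

section GroupAlgebra

variable {K : Type*} [Field K]

theorem gElt_mul_gElt : gElt K * gElt K = 1 := by
  rw [gElt, ← map_mul, ← ofAdd_add, show (1 + 1 : ZMod 2) = 0 from rfl, ofAdd_zero, map_one]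

theorem groupAlg_hom_ext {M : Type*} [AddCommMonoid M] [Module K M] {f f' : GroupAlg K →ₗ[K] M}
    (h_one : f 1 = f' 1) (h_gElt : f (gElt K) = f' (gElt K)) : f = f' := by
  refine (MonoidAlgebra.basis (Multiplicative (ZMod 2)) K).ext fun u => ?_
  induction u with | ofAdd i
  rw [MonoidAlgebra.basis_apply]
  fin_cases i
  · exact h_one
  · exact h_gElt

theorem finrank_groupAlg : Module.finrank K (GroupAlg K) = 2 := by
  rw [Module.finrank_eq_card_basis (MonoidAlgebra.basis (Multiplicative (ZMod 2)) K)]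
  rfl

variable (K) in
/-- The Frobenius form `ε(1) = 1`, `ε(g) = 0` on `k[ℤ/2]`. -/
def groupAlgForm : GroupAlg K →ₗ[K] K :=
  (MonoidAlgebra.basis (Multiplicative (ZMod 2)) K).coord 1

theorem groupAlgForm_one : groupAlgForm K 1 = 1 := by
  simp [groupAlgForm, MonoidAlgebra.basis]

theorem groupAlgForm_gElt : groupAlgForm K (gElt K) = 0 := by
  have ofAdd_one_ne_one : Multiplicative.ofAdd (1 : ZMod 2) ≠ 1 := by decide
  simp [groupAlgForm, gElt, MonoidAlgebra.basis, ofAdd_one_ne_one]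

theorem isFrobeniusForm_groupAlgForm {Δ : GroupAlg K →ₗ[K] GroupAlg K ⊗[K] GroupAlg K}
    (hΔ1 : Δ 1 = (1 : GroupAlg K) ⊗ₜ[K] (1 : GroupAlg K) + gElt K ⊗ₜ[K] gElt K)
    (hΔg : Δ (gElt K) = (1 : GroupAlg K) ⊗ₜ[K] gElt K + gElt K ⊗ₜ[K] (1 : GroupAlg K)) :
    IsFrobeniusForm (groupAlgForm K) Δ := by
  constructor <;> refine groupAlg_hom_ext (groupAlg_hom_ext ?_ ?_) (groupAlg_hom_ext ?_ ?_) <;>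
    simp [hΔ1, hΔg, gElt_mul_gElt, groupAlgForm_one, groupAlgForm_gElt]

end GroupAlgebra

/-- for the group-algebra Frobenius algebra `A = k[ℤ/2]` (with
`Δ(1) = 1⊗1 + g⊗g`, `Δ(g) = 1⊗g + g⊗1`), the space `Z²_f(A;A)` of Frobenius 2-cocycles —
pairs `(φ₁,φ₂)` with `d^{2,1}(φ₁) = 0`, `d^{2,2}_{(1)}(φ₁,φ₂) = 0`, `d^{2,3}(φ₂) = 0` —
has dimension 6 over `k`: it is the span of 6 linearly independent vectors. -/
theorem groupAlgebra_Z2_dim_six (K : Type*) [Field K]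
    (Δ : GroupAlg K →ₗ[K] GroupAlg K ⊗[K] GroupAlg K)
    (hΔ1 : Δ 1 = (1 : GroupAlg K) ⊗ₜ[K] (1 : GroupAlg K) + gElt K ⊗ₜ[K] gElt K)
    (hΔg : Δ (gElt K) = (1 : GroupAlg K) ⊗ₜ[K] gElt K + gElt K ⊗ₜ[K] (1 : GroupAlg K)) :
    ∃ f : Fin 6 → (GroupAlg K ⊗[K] GroupAlg K →ₗ[K] GroupAlg K) ×
        (GroupAlg K →ₗ[K] GroupAlg K ⊗[K] GroupAlg K),
      LinearIndependent K f ∧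
      ∀ p : (GroupAlg K ⊗[K] GroupAlg K →ₗ[K] GroupAlg K) ×
          (GroupAlg K →ₗ[K] GroupAlg K ⊗[K] GroupAlg K),
        (d21 K (GroupAlg K) p.1 = 0 ∧ d221 K (GroupAlg K) Δ p.1 p.2 = 0 ∧
          d23 K (GroupAlg K) Δ p.2 = 0) ↔
        p ∈ Submodule.span K (Set.range f) :=
  groupAlgebra_Z2_dim_six_general (isFrobeniusForm_groupAlgForm hΔ1 hΔg) finrank_groupAlg
end
end
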